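/- Let η ∈ (0, 1/2) and γ ∈ (0, 1]. Let K be a real number with 1 ≤ K and K² < (1 − 2ηγ)(1 + η²)/((1 − 2η² − 4η³) γ²). Define c := (1 − 2ηγ)/((1 + η²) K² γ²) and d := 1 − (1 − 2η)/(1 + η²). Let β_max satisfy 0 < β_max < min{ (√((1 + 3d²)² + 8(1 + d²)(d⁴ + d²c − d²)) − (1 + 3d²))/(4(1 + d²)), (√(1 + c) − 1)/2 }. Define b₁ := 1 + 3β_max + 2β_max² − c, b₂ := 2β_max² + β_max, and q := (b₁ + √(b₁² + 4 b₂))/2. Then b₂ > 0, b₁ + b₂ < 1, and b₁ + b₂ ≤ q < d² < 1. -/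

import Mathlib

/-!
`q` is the larger root of `x ^ 2 = b₁ * x + b₂`. At `x = b₁ + b₂` the parabola
`x ^ 2 - b₁ * x - b₂` equals `b₂ * (b₁ + b₂ - 1)`, so `b₁ + b₂ < 1` gives `b₁ + b₂ ≤ q`.
At `x = d ^ 2` it is a concave quadratic in the momentum `β`, whose larger root is the first entry
of the minimum bounding `β`; a positive `β` below that root makes it positive, whence `q < d ^ 2`.
The second entry is the larger root of `4 * β ^ 2 + 4 * β = c`, which says `b₁ + b₂ = 1`.
-/

/-- The larger root of `x ^ 2 = b₁ * x + b₂`, which for `b₁, b₂ ≥ 0` is the convergence rate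
of sequences with `u (n + 2) ≤ b₁ * u (n + 1) + b₂ * u n`. The value is junk if
`b₁ ^ 2 + 4 * b₂ < 0`. -/
noncomputable def dominantRoot (b₁ b₂ : ℝ) : ℝ :=
  (b₁ + √(b₁ ^ 2 + 4 * b₂)) / 2

theorem le_dominantRoot_of_sq_le {b₁ b₂ x : ℝ} (h : x ^ 2 ≤ b₁ * x + b₂) :
    x ≤ dominantRoot b₁ b₂ := by
  have : 2 * x - b₁ ≤ √(b₁ ^ 2 + 4 * b₂) := Real.le_sqrt_of_sq_le (by linarith)
  unfold dominantRoot
  linarith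

theorem dominantRoot_lt_of_lt_sq {b₁ b₂ x : ℝ} (hb₂ : 0 ≤ b₂) (hx : 0 ≤ x)
    (h : b₁ * x + b₂ < x ^ 2) : dominantRoot b₁ b₂ < x := by
  have hb₁ : b₁ < x := sub_pos.mp (pos_of_mul_pos_right (by linarith : 0 < x * (x - b₁)) hx)
  have : √(b₁ ^ 2 + 4 * b₂) < 2 * x - b₁ := (Real.sqrt_lt' (by linarith)).mpr (by linarith)
  unfold dominantRoot
  linarith

theorem add_le_dominantRoot {b₁ b₂ : ℝ} (hb₂ : 0 ≤ b₂) (h : b₁ + b₂ ≤ 1) :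
    b₁ + b₂ ≤ dominantRoot b₁ b₂ := by
  have : b₂ * (b₁ + b₂) ≤ b₂ := mul_le_of_le_one_right hb₂ h
  exact le_dominantRoot_of_sq_le (by linarith)

theorem quadratic_lt_of_lt_root {a b e x : ℝ} (ha : 0 < a) (hx : 0 ≤ 2 * a * x + b)
    (h : x < (√(b ^ 2 + 4 * a * e) - b) / (2 * a)) : a * x ^ 2 + b * x < e := by
  rw [lt_div_iff₀ (by positivity)] at h
  have hsq : (2 * a * x + b) ^ 2 < b ^ 2 + 4 * a * e := (Real.lt_sqrt hx).mp (by linarith)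
  refine lt_of_mul_lt_mul_left (a := 4 * a) ?_ (by positivity)
  linarith

theorem abs_one_sub_div_one_add_sq_lt_one {η : ℝ} (hη : η < 1 / 2) :
    |1 - (1 - 2 * η) / (1 + η ^ 2)| < 1 := by
  have hpos : 0 < (1 - 2 * η) / (1 + η ^ 2) := div_pos (by linarith) (by positivity)
  have hlt : (1 - 2 * η) / (1 + η ^ 2) < 2 := by
    rw [div_lt_iff₀ (by positivity)]
    linarith [sq_nonneg (2 * η + 1)]
  rw [abs_lt]
  constructor <;> linarith

theorem stmt12_general (c d : ℝ) (hd : |d| < 1) (βmax : ℝ) (hβ0 : 0 < βmax)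
    (hβ : βmax < min
      ((√((1 + 3 * d ^ 2) ^ 2 + 8 * (1 + d ^ 2) * (d ^ 4 + d ^ 2 * c - d ^ 2))
          - (1 + 3 * d ^ 2)) / (4 * (1 + d ^ 2)))
      ((√(1 + c) - 1) / 2))
    (b1 b2 q : ℝ)
    (hb1 : b1 = 1 + 3 * βmax + 2 * βmax ^ 2 - c)
    (hb2 : b2 = 2 * βmax ^ 2 + βmax)
    (hq : q = (b1 + √(b1 ^ 2 + 4 * b2)) / 2) :
    0 < b2 ∧ b1 + b2 < 1 ∧ b1 + b2 ≤ q ∧ q < d ^ 2 ∧ d ^ 2 < 1 := by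
  have hb2_pos : 0 < b2 := by rw [hb2]; positivity
  have hsum : b1 + b2 < 1 := by
    have : 1 * βmax ^ 2 + 1 * βmax < c / 4 :=
      quadratic_lt_of_lt_root one_pos (by positivity) <| calc
        βmax < (√(1 + c) - 1) / 2 := hβ.trans_le (min_le_right _ _)
        _ = _ := by ring_nf
    linarith
  have hd_sq : b1 * d ^ 2 + b2 < (d ^ 2) ^ 2 := by
    have : 2 * (1 + d ^ 2) * βmax ^ 2 + (1 + 3 * d ^ 2) * βmax < d ^ 4 + d ^ 2 * c - d ^ 2 :=
      quadratic_lt_of_lt_root (by positivity) (by positivity) <| calc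
        βmax < _ := hβ.trans_le (min_le_left _ _)
        _ = _ := by ring_nf
    rw [hb1, hb2]
    linarith
  have hq_root : q = dominantRoot b1 b2 := hq
  rw [hq_root]
  exact ⟨hb2_pos, hsum, add_le_dominantRoot hb2_pos.le hsum.le,
    dominantRoot_lt_of_lt_sq hb2_pos.le (sq_nonneg d) hd_sq, (sq_lt_one_iff_abs_lt_one d).mpr hd⟩

/-- Arithmetic facts on the constants of Theorem 3.1: `b₂ > 0`, `b₁ + b₂ < 1`
and `b₁ + b₂ ≤ q < d² < 1`. -/
theorem stmt12 (η γ K : ℝ) (hη0 : 0 < η) (hη : η < 1 / 2)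
    (hγ0 : 0 < γ) (hγ1 : γ ≤ 1) (hK1 : 1 ≤ K)
    (hK2 : K ^ 2 < (1 - 2 * η * γ) * (1 + η ^ 2) / ((1 - 2 * η ^ 2 - 4 * η ^ 3) * γ ^ 2))
    (c d : ℝ) (hc : c = (1 - 2 * η * γ) / ((1 + η ^ 2) * K ^ 2 * γ ^ 2))
    (hd : d = 1 - (1 - 2 * η) / (1 + η ^ 2))
    (βmax : ℝ) (hβ0 : 0 < βmax)
    (hβ : βmax < min
      ((Real.sqrt ((1 + 3 * d ^ 2) ^ 2 + 8 * (1 + d ^ 2) * (d ^ 4 + d ^ 2 * c - d ^ 2))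
          - (1 + 3 * d ^ 2)) / (4 * (1 + d ^ 2)))
      ((Real.sqrt (1 + c) - 1) / 2))
    (b1 b2 q : ℝ)
    (hb1 : b1 = 1 + 3 * βmax + 2 * βmax ^ 2 - c)
    (hb2 : b2 = 2 * βmax ^ 2 + βmax)
    (hq : q = (b1 + Real.sqrt (b1 ^ 2 + 4 * b2)) / 2) :
    0 < b2 ∧ b1 + b2 < 1 ∧ b1 + b2 ≤ q ∧ q < d ^ 2 ∧ d ^ 2 < 1 := by
  have hd_abs : |d| < 1 := hd ▸ abs_one_sub_div_one_add_sq_lt_one hη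
  exact stmt12_general c d hd_abs βmax hβ0 hβ b1 b2 q hb1 hb2 hq
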